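/- The metric space of all simplicial complexes over S, equipped with the distance d, is complete: for every sequence (𝒦ₙ) of simplicial complexes over S such that for every ε > 0 there is N with d(𝒦ₘ, 𝒦ₙ) < ε for all m, n ≥ N, there exists a simplicial complex 𝒦 over S with d(𝒦ₙ, 𝒦) → 0. -/

import Mathlib

open scoped BigOperators

/-- A simplicial complex over the vertex set `S`: a nonempty collection of
nonempty finite subsets of `S`, closed under taking nonempty subsets. -/
def IsSimplicialComplex {S : Type*} (K : Set (Finset S)) : Prop :=
  K.Nonempty ∧ (∀ F ∈ K, F.Nonempty) ∧
    ∀ F ∈ K, ∀ G : Finset S, G.Nonempty → G ⊆ F → G ∈ K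

/-- Halved ℓ¹ distance between finitely supported real functions:
`d(α,β) = (1/2) ∑ₛ |α s - β s|`. -/
noncomputable def l1dist {S : Type*} (α β : S →₀ ℝ) : ℝ :=
  (1 / 2) * (α - β).sum fun _ x => |x|

/-- The ℓ¹ geometric realization of a collection `K` of finite subsets of `S`:
finitely supported probability vectors whose support is a face of `K`. -/
def realization {S : Type*} (K : Set (Finset S)) : Set (S →₀ ℝ) :=
  {α | (∀ s, 0 ≤ α s) ∧ (α.sum fun _ x => x) = 1 ∧ α.support ∈ K}

/-- Distance from a point to a set of finitely supported functions. -/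
noncomputable def distToSet {S : Type*} (α : S →₀ ℝ) (X : Set (S →₀ ℝ)) : ℝ :=
  sInf (l1dist α '' X)

/-- One-sided Hausdorff distance between (the realizations of) two complexes. -/
noncomputable def hdelta {S : Type*} (K₁ K₂ : Set (Finset S)) : ℝ :=
  sSup ((fun α => distToSet α (realization K₂)) '' realization K₁)

/-- Hausdorff distance between (the realizations of) two simplicial complexes. -/
noncomputable def hdist {S : Type*} (K₁ K₂ : Set (Finset S)) : ℝ :=
  max (hdelta K₁ K₂) (hdelta K₂ K₁)

/-- `d(F, K)`: supremum of distances to `|K|₁` over probability vectors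
supported exactly on `F`. -/
noncomputable def dFace {S : Type*} (F : Finset S) (K : Set (Finset S)) : ℝ :=
  sSup ((fun α => distToSet α (realization K)) ''
    {α : S →₀ ℝ | (∀ s, 0 ≤ α s) ∧ (α.sum fun _ x => x) = 1 ∧ α.support = F})

/-- The `n`-skeleton of a simplicial complex. -/
def skeleton {S : Type*} (n : ℕ) (K : Set (Finset S)) : Set (Finset S) :=
  {F | F ∈ K ∧ F.card ≤ n + 1}

/-!
Testing the uniform distribution on a face of cardinality `k` shows that two complexes at distance
less than `1 / k` have the same faces of cardinality at most `k`. Hence each skeleton of a Cauchy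
sequence is eventually constant, and the complex with these skeleta is the only possible limit.
It is the limit because a point `γ` at distance less than `1` from `α` can be conditioned on the
support of `α` without moving away from `α`: every point of `|K n|₁` is thus approximated, in some
later `|K m|₁`, by a point whose support is too small to change from `K m` to the limit.
-/

open Convexity Filter

section L1Distance

variable {S : Type*}

lemma l1dist_nonneg (α β : S →₀ ℝ) : 0 ≤ l1dist α β := by
  unfold l1dist Finsupp.sum
  positivity

lemma l1dist_eq_sum_posPart {α β : S →₀ ℝ} (hβ : 0 ≤ β)
    (hsum : (α.sum fun _ x => x) = β.sum fun _ x => x) :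
    l1dist α β = ∑ s ∈ α.support, (α s - β s)⁺ := by
  classical
  have abs_eq (x : ℝ) : |x| = 2 * x⁺ - x := by
    linarith [posPart_add_negPart x, posPart_sub_negPart x]
  have sum_sub_eq_zero : ∑ s ∈ α.support ∪ β.support, (α s - β s) = 0 := by
    rw [Finset.sum_sub_distrib, sub_eq_zero,
      ← Finsupp.sum_of_support_subset α Finset.subset_union_left (fun _ x => x) (by simp),
      ← Finsupp.sum_of_support_subset β Finset.subset_union_right (fun _ x => x) (by simp), hsum]
  have posPart_eq_zero_off_support :
      ∀ s ∈ α.support ∪ β.support, s ∉ α.support → (α s - β s)⁺ = 0 := by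
    intro s _ hs
    rw [Finsupp.notMem_support_iff.1 hs, zero_sub, posPart_eq_zero, neg_nonpos]
    exact hβ s
  calc l1dist α β
      = 1 / 2 * ∑ s ∈ α.support ∪ β.support, |α s - β s| := by
        rw [l1dist, Finsupp.sum_of_support_subset _ Finsupp.support_sub _ (by simp)]
        rfl
    _ = ∑ s ∈ α.support ∪ β.support, (α s - β s)⁺ := by
        simp only [abs_eq]
        rw [Finset.sum_sub_distrib, sum_sub_eq_zero, ← Finset.mul_sum]
        ring
    _ = ∑ s ∈ α.support, (α s - β s)⁺ :=
        (Finset.sum_subset Finset.subset_union_left posPart_eq_zero_off_support).symm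

lemma l1dist_weights (α β : StdSimplex ℝ S) :
    l1dist α.weights β.weights = ∑ s ∈ α.weights.support, (α.weights s - β.weights s)⁺ :=
  l1dist_eq_sum_posPart β.nonneg (α.total.trans β.total.symm)

lemma l1dist_weights_le_one (α β : StdSimplex ℝ S) : l1dist α.weights β.weights ≤ 1 := by
  rw [l1dist_weights, ← α.total]
  exact Finset.sum_le_sum fun s _ => max_le (sub_le_self _ (β.nonneg s)) (α.nonneg s)

lemma weights_sub_le_l1dist (α β : StdSimplex ℝ S) (s : S) :
    α.weights s - β.weights s ≤ l1dist α.weights β.weights := by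
  by_cases hs : s ∈ α.weights.support
  · rw [l1dist_weights]
    exact (le_posPart _).trans <| Finset.single_le_sum
      (f := fun s => (α.weights s - β.weights s)⁺) (fun _ _ => posPart_nonneg _) hs
  · rw [Finsupp.notMem_support_iff.1 hs, zero_sub]
    exact (neg_nonpos.2 (β.nonneg s)).trans (l1dist_nonneg _ _)

lemma l1dist_weights_le_of_forall_le {α β γ : StdSimplex ℝ S}
    (h : ∀ s ∈ α.weights.support, γ.weights s ≤ β.weights s) :
    l1dist α.weights β.weights ≤ l1dist α.weights γ.weights := by
  rw [l1dist_weights, l1dist_weights]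
  exact Finset.sum_le_sum fun s hs => posPart_mono (sub_le_sub_left (h s hs) _)

lemma one_sub_l1dist_le_sum_weights (α γ : StdSimplex ℝ S) :
    1 - l1dist α.weights γ.weights ≤ ∑ s ∈ α.weights.support, γ.weights s := by
  have hα : ∑ s ∈ α.weights.support, α.weights s = 1 := α.total
  have hle : ∑ s ∈ α.weights.support, (α.weights s - γ.weights s) ≤
      l1dist α.weights γ.weights :=
    (Finset.sum_le_sum fun _ _ => le_posPart _).trans_eq (l1dist_weights α γ).symm
  rw [Finset.sum_sub_distrib, hα] at hle
  linarith

lemma weights_le_weights_restrict (w : StdSimplex ℝ S) (T : Set S)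
    (hT : ∃ s ∈ T, w.weights s ≠ 0) {s : S} (hs : s ∈ T) :
    w.weights s ≤ (w.restrict T hT).weights s := by
  classical
  set m := (w.weights.filter (· ∈ T)).sum fun _ x => x
  have hm_eq : m = ∑ t ∈ w.weights.support with t ∈ T, w.weights t :=
    Finset.sum_congr rfl fun t ht => Finsupp.filter_apply_pos _ _ (Finset.mem_filter.1 ht).2
  have hm_le_one : m ≤ 1 := by
    rw [hm_eq, ← w.total]
    exact Finset.sum_le_sum_of_subset_of_nonneg (Finset.filter_subset _ _)
      fun t _ _ => w.nonneg t
  have hm_pos : 0 < m := by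
    obtain ⟨t, htT, ht⟩ := hT
    rw [hm_eq]
    exact Finset.sum_pos' (fun t _ => w.nonneg t)
      ⟨t, by simp [ht, htT], (w.nonneg t).lt_of_ne' ht⟩
  rw [StdSimplex.weights_restrict, Finsupp.smul_apply, Finsupp.filter_apply_pos _ _ hs, smul_eq_mul]
  exact le_mul_of_one_le_left (w.nonneg s) ((one_le_inv₀ hm_pos).2 hm_le_one)

lemma exists_support_subset_l1dist_le {α γ : StdSimplex ℝ S}
    (h : l1dist α.weights γ.weights < 1) :
    ∃ β : StdSimplex ℝ S, β.weights.support ⊆ α.weights.support ∧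
      β.weights.support ⊆ γ.weights.support ∧
      l1dist α.weights β.weights ≤ l1dist α.weights γ.weights := by
  classical
  have hmass : ∑ s ∈ α.weights.support, γ.weights s ≠ 0 := by
    linarith [one_sub_l1dist_le_sum_weights α γ]
  have hmeet : ∃ s ∈ (α.weights.support : Set S), γ.weights s ≠ 0 :=
    Finset.exists_ne_zero_of_sum_ne_zero hmass
  have hsupp := γ.support_weights_restrict (α.weights.support : Set S) hmeet
  refine ⟨γ.restrict α.weights.support hmeet, ?_, ?_, l1dist_weights_le_of_forall_le fun s hs => ?_⟩
  · exact hsupp ▸ fun s hs => (Finset.mem_filter.1 hs).2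
  · exact hsupp ▸ Finset.filter_subset _ _
  · exact weights_le_weights_restrict γ _ hmeet hs

end L1Distance

section HausdorffDistance

variable {S : Type*} {K₁ K₂ : Set (Finset S)}

lemma realization_eq_image (K : Set (Finset S)) :
    realization K = StdSimplex.weights '' {α : StdSimplex ℝ S | α.weights.support ∈ K} := by
  ext α
  constructor
  · rintro ⟨hnonneg, htotal, hα⟩
    exact ⟨⟨α, hnonneg, htotal⟩, hα, rfl⟩
  · rintro ⟨α, hα, rfl⟩
    exact ⟨α.nonneg, α.total, hα⟩

/-- The uniform distribution on a finite set: the barycentre of a face, used to test whether the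
face belongs to a nearby complex. -/
noncomputable def uniformWeights (F : Finset S) (hF : F.Nonempty) : StdSimplex ℝ S where
  weights := Finsupp.indicator F fun _ _ => (F.card : ℝ)⁻¹
  nonneg s := by
    classical
    rw [Finsupp.indicator_apply]
    split_ifs <;> simp
  total := by
    rw [Finsupp.sum_indicator_index _ (by simp)]
    simp [hF.ne_empty]

lemma uniformWeights_apply {F : Finset S} (hF : F.Nonempty) {s : S} (hs : s ∈ F) :
    (uniformWeights F hF).weights s = (F.card : ℝ)⁻¹ :=
  Finsupp.indicator_of_mem hs fun _ _ => (F.card : ℝ)⁻¹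

lemma support_uniformWeights {F : Finset S} (hF : F.Nonempty) :
    (uniformWeights F hF).weights.support = F := by
  refine (Finsupp.support_indicator_subset _ _).antisymm fun s hs => ?_
  rw [Finsupp.mem_support_iff]
  exact (uniformWeights_apply hF hs).trans_ne (by simp [hF.ne_empty])

lemma IsSimplicialComplex.realization_nonempty {K : Set (Finset S)} (hK : IsSimplicialComplex K) :
    (realization K).Nonempty := by
  obtain ⟨⟨F, hF⟩, hne, -⟩ := hK
  rw [realization_eq_image]
  exact ⟨_, uniformWeights F (hne F hF), by simpa [support_uniformWeights] using hF, rfl⟩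

lemma bddBelow_l1dist_image (α : S →₀ ℝ) (X : Set (S →₀ ℝ)) : BddBelow (l1dist α '' X) :=
  ⟨0, Set.forall_mem_image.2 fun β _ => l1dist_nonneg α β⟩

lemma distToSet_le_l1dist {α β : S →₀ ℝ} {X : Set (S →₀ ℝ)} (hβ : β ∈ X) :
    distToSet α X ≤ l1dist α β :=
  csInf_le (bddBelow_l1dist_image α X) (Set.mem_image_of_mem _ hβ)

lemma hdelta_nonneg (K₁ K₂ : Set (Finset S)) : 0 ≤ hdelta K₁ K₂ :=
  Real.sSup_nonneg <| Set.forall_mem_image.2 fun α _ =>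
    Real.sInf_nonneg <| Set.forall_mem_image.2 fun β _ => l1dist_nonneg α β

lemma hdist_nonneg (K₁ K₂ : Set (Finset S)) : 0 ≤ hdist K₁ K₂ :=
  (hdelta_nonneg K₁ K₂).trans (le_max_left _ _)

lemma hdelta_le {ε : ℝ} (hε : 0 ≤ ε)
    (h : ∀ α : StdSimplex ℝ S, α.weights.support ∈ K₁ →
      ∃ β : StdSimplex ℝ S, β.weights.support ∈ K₂ ∧ l1dist α.weights β.weights ≤ ε) :
    hdelta K₁ K₂ ≤ ε := by
  rw [hdelta, realization_eq_image K₁]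
  refine Real.sSup_le ?_ hε
  rintro _ ⟨_, ⟨α, hα, rfl⟩, rfl⟩
  obtain ⟨β, hβ, hαβ⟩ := h α hα
  have hβ_mem : β.weights ∈ realization K₂ := ⟨β.nonneg, β.total, hβ⟩
  exact (distToSet_le_l1dist hβ_mem).trans hαβ

lemma distToSet_le_hdelta (hK₂ : IsSimplicialComplex K₂) {α : S →₀ ℝ} (hα : α ∈ realization K₁) :
    distToSet α (realization K₂) ≤ hdelta K₁ K₂ := by
  refine le_csSup ⟨1, ?_⟩ (Set.mem_image_of_mem _ hα)
  obtain ⟨β, hβ⟩ := hK₂.realization_nonempty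
  rintro _ ⟨γ, hγ, rfl⟩
  refine (distToSet_le_l1dist hβ).trans ?_
  rw [realization_eq_image] at hβ hγ
  obtain ⟨⟨β, -, rfl⟩, ⟨γ, -, rfl⟩⟩ := And.intro hβ hγ
  exact l1dist_weights_le_one γ β

lemma exists_l1dist_lt_of_hdelta_lt (hK₂ : IsSimplicialComplex K₂) {ε : ℝ}
    (h : hdelta K₁ K₂ < ε) {α : StdSimplex ℝ S} (hα : α.weights.support ∈ K₁) :
    ∃ β : StdSimplex ℝ S, β.weights.support ∈ K₂ ∧ l1dist α.weights β.weights < ε := by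
  have hinf_lt : distToSet α.weights (realization K₂) < ε :=
    (distToSet_le_hdelta hK₂ ⟨α.nonneg, α.total, hα⟩).trans_lt h
  obtain ⟨_, ⟨_, hβ, rfl⟩, hlt⟩ :=
    exists_lt_of_csInf_lt (hK₂.realization_nonempty.image _) hinf_lt
  rw [realization_eq_image] at hβ
  obtain ⟨β, hβ, rfl⟩ := hβ
  exact ⟨β, hβ, hlt⟩

lemma exists_support_subset_l1dist_lt_of_hdelta_lt (hK₂ : IsSimplicialComplex K₂) {ε : ℝ}
    (hε : ε ≤ 1) (h : hdelta K₁ K₂ < ε) {α : StdSimplex ℝ S} (hα : α.weights.support ∈ K₁) :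
    ∃ β : StdSimplex ℝ S, β.weights.support ∈ K₂ ∧ β.weights.support ⊆ α.weights.support ∧
      l1dist α.weights β.weights < ε := by
  obtain ⟨γ, hγ, hαγ⟩ := exists_l1dist_lt_of_hdelta_lt hK₂ h hα
  obtain ⟨β, hβα, hβγ, hle⟩ := exists_support_subset_l1dist_le (hαγ.trans_le hε)
  exact ⟨β, hK₂.2.2 _ hγ _ β.support_weights_nonempty hβγ, hβα, hle.trans_lt hαγ⟩

lemma skeleton_subset_of_hdelta_lt (hK₁ : IsSimplicialComplex K₁) (hK₂ : IsSimplicialComplex K₂)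
    {d : ℕ} (h : hdelta K₁ K₂ < 1 / (d + 1)) : skeleton d K₁ ⊆ skeleton d K₂ := by
  rintro F ⟨hF, hcard⟩
  have hne : F.Nonempty := hK₁.2.1 F hF
  obtain ⟨β, hβ, hlt⟩ := exists_l1dist_lt_of_hdelta_lt hK₂ h
    (α := uniformWeights F hne) (by rwa [support_uniformWeights])
  refine ⟨hK₂.2.2 _ hβ F hne fun s hs => Finsupp.mem_support_iff.2 fun hβs => hlt.not_ge ?_, hcard⟩
  have hcard_pos : (0 : ℝ) < F.card := by exact_mod_cast hne.card_pos
  calc 1 / ((d : ℝ) + 1)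
      ≤ 1 / F.card := one_div_le_one_div_of_le hcard_pos (by exact_mod_cast hcard)
    _ = (uniformWeights F hne).weights s - β.weights s := by
        rw [uniformWeights_apply hne hs, hβs, sub_zero, one_div]
    _ ≤ l1dist (uniformWeights F hne).weights β.weights := weights_sub_le_l1dist _ _ s

lemma skeleton_eq_of_hdist_lt (hK₁ : IsSimplicialComplex K₁) (hK₂ : IsSimplicialComplex K₂)
    {d : ℕ} (h : hdist K₁ K₂ < 1 / (d + 1)) : skeleton d K₁ = skeleton d K₂ :=
  (skeleton_subset_of_hdelta_lt hK₁ hK₂ (max_lt_iff.1 h).1).antisymm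
    (skeleton_subset_of_hdelta_lt hK₂ hK₁ (max_lt_iff.1 h).2)

end HausdorffDistance

section SkeletalLimit

variable {S ι : Type*} {K : ι → Set (Finset S)} {K₀ L : Set (Finset S)} {l : Filter ι}

/-- `L` is the skeletal limit of the family `K` along `l`: each skeleton of `K i` eventually
coincides with that of `L`. This is the combinatorial candidate for a Hausdorff limit. -/
def IsSkeletalLimit (K : ι → Set (Finset S)) (l : Filter ι) (L : Set (Finset S)) : Prop :=
  ∀ d, ∀ᶠ i in l, skeleton d (K i) = skeleton d L

namespace IsSkeletalLimit

lemma eventually_mem_iff (hL : IsSkeletalLimit K l L) (F : Finset S) :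
    ∀ᶠ i in l, F ∈ K i ↔ F ∈ L := by
  filter_upwards [hL F.card] with i hi
  simpa [skeleton] using Set.ext_iff.1 hi F

lemma isSimplicialComplex [l.NeBot] (hL : IsSkeletalLimit K l L)
    (hK : ∀ i, IsSimplicialComplex (K i)) : IsSimplicialComplex L := by
  refine ⟨?_, fun F hF => ?_, fun F hF G hG hGF => ?_⟩
  · obtain ⟨i, hi⟩ := (hL 0).exists
    obtain ⟨⟨F, hF⟩, hne, hsub⟩ := hK i
    obtain ⟨s, hs⟩ := hne F hF
    have hvertex : {s} ∈ skeleton 0 (K i) := ⟨hsub F hF {s} (by simp) (by simpa using hs), by simp⟩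
    rw [hi] at hvertex
    exact ⟨{s}, hvertex.1⟩
  · obtain ⟨i, hi⟩ := (hL.eventually_mem_iff F).exists
    exact (hK i).2.1 F (hi.2 hF)
  · obtain ⟨i, hiF, hiG⟩ := ((hL.eventually_mem_iff F).and (hL.eventually_mem_iff G)).exists
    exact hiG.1 ((hK i).2.2 F (hiF.2 hF) G hG hGF)

lemma hdelta_left_le (hL : IsSkeletalLimit K l L) (hK₀ : IsSimplicialComplex K₀) {ε : ℝ}
    (h : ∃ᶠ i in l, hdelta (K i) K₀ < ε) : hdelta L K₀ ≤ ε := by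
  obtain ⟨j, hj⟩ := h.exists
  refine hdelta_le ((hdelta_nonneg _ _).trans hj.le) fun α hα => ?_
  obtain ⟨i, hi, hαi⟩ := (h.and_eventually (hL.eventually_mem_iff α.weights.support)).exists
  obtain ⟨β, hβ, hlt⟩ := exists_l1dist_lt_of_hdelta_lt hK₀ hi (hαi.2 hα)
  exact ⟨β, hβ, hlt.le⟩

lemma hdelta_right_le (hL : IsSkeletalLimit K l L) (hK : ∀ i, IsSimplicialComplex (K i)) {ε : ℝ}
    (hε : ε ≤ 1) (h : ∃ᶠ i in l, hdelta K₀ (K i) < ε) : hdelta K₀ L ≤ ε := by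
  obtain ⟨j, hj⟩ := h.exists
  refine hdelta_le ((hdelta_nonneg _ _).trans hj.le) fun α hα => ?_
  obtain ⟨i, hi, hskel⟩ := (h.and_eventually (hL α.weights.support.card)).exists
  obtain ⟨β, hβ, hβα, hlt⟩ := exists_support_subset_l1dist_lt_of_hdelta_lt (hK i) hε hi hα
  have hβskel : β.weights.support ∈ skeleton α.weights.support.card (K i) :=
    ⟨hβ, (Finset.card_le_card hβα).trans (Nat.le_succ _)⟩
  rw [hskel] at hβskel
  exact ⟨β, hβskel.1, hlt.le⟩

lemma hdist_le (hL : IsSkeletalLimit K l L) (hK : ∀ i, IsSimplicialComplex (K i))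
    (hK₀ : IsSimplicialComplex K₀) {ε : ℝ} (hε : ε ≤ 1)
    (h : ∃ᶠ i in l, hdist K₀ (K i) < ε) : hdist K₀ L ≤ ε :=
  max_le (hL.hdelta_right_le hK hε (h.mono fun _ hi => (max_lt_iff.1 hi).1))
    (hL.hdelta_left_le hK₀ (h.mono fun _ hi => (max_lt_iff.1 hi).2))

end IsSkeletalLimit

end SkeletalLimit

section CauchySequence

variable {S : Type*} {K : ℕ → Set (Finset S)}

/-- A sequence that is Cauchy for `hdist`. Mathlib's `CauchySeq` is not available, as `hdist` is
not the distance of a metric space structure on all of `Set (Finset S)`. -/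
def IsHdistCauchy (K : ℕ → Set (Finset S)) : Prop :=
  ∀ ε : ℝ, 0 < ε → ∃ N : ℕ, ∀ m n : ℕ, N ≤ m → N ≤ n → hdist (K m) (K n) < ε

namespace IsHdistCauchy

lemma isSkeletalLimit_liminf (hcauchy : IsHdistCauchy K) (hK : ∀ n, IsSimplicialComplex (K n)) :
    IsSkeletalLimit K atTop (liminf K atTop) := by
  intro d
  obtain ⟨N, hN⟩ := hcauchy (1 / (d + 1)) (by positivity)
  have hskel {m n : ℕ} (hm : N ≤ m) (hn : N ≤ n) : skeleton d (K m) = skeleton d (K n) :=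
    skeleton_eq_of_hdist_lt (hK m) (hK n) (hN m n hm hn)
  filter_upwards [eventually_ge_atTop N] with n hn
  ext F
  constructor
  · intro hF
    refine ⟨mem_liminf_iff_eventually_mem.2 ?_, hF.2⟩
    filter_upwards [eventually_ge_atTop N] with m hm
    exact ((hskel hn hm).subset hF).1
  · rintro ⟨hF, hcard⟩
    obtain ⟨m, hFm, hm⟩ :=
      ((mem_liminf_iff_eventually_mem.1 hF).and (eventually_ge_atTop N)).exists
    exact (hskel hm hn).subset ⟨hFm, hcard⟩

lemma tendsto_hdist {L : Set (Finset S)} (hcauchy : IsHdistCauchy K)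
    (hK : ∀ n, IsSimplicialComplex (K n)) (hL : IsSkeletalLimit K atTop L) :
    Tendsto (fun n => hdist (K n) L) atTop (nhds 0) := by
  refine tendsto_order.2 ⟨fun ε hε => .of_forall fun n => hε.trans_le (hdist_nonneg _ _),
    fun ε hε => ?_⟩
  obtain ⟨δ, hδ, hδlt⟩ := exists_between (lt_min hε one_pos)
  obtain ⟨N, hN⟩ := hcauchy δ hδ
  filter_upwards [eventually_ge_atTop N] with n hn
  have hclose : ∀ᶠ m in atTop, hdist (K n) (K m) < δ :=
    (eventually_ge_atTop N).mono fun m hm => hN n m hn hm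
  exact (hL.hdist_le hK (hK n) (hδlt.le.trans (min_le_right _ _)) hclose.frequently).trans_lt
    (hδlt.trans_le (min_le_left _ _))

end IsHdistCauchy

end CauchySequence

/-- The space of simplicial complexes over `S` with the Hausdorff distance is
complete: every Cauchy sequence of simplicial complexes converges to a
simplicial complex. -/
theorem stmt18 {S : Type*} (K : ℕ → Set (Finset S))
    (hK : ∀ n, IsSimplicialComplex (K n))
    (hcauchy : ∀ ε : ℝ, 0 < ε → ∃ N : ℕ, ∀ m n : ℕ, N ≤ m → N ≤ n →
      hdist (K m) (K n) < ε) :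
    ∃ L : Set (Finset S), IsSimplicialComplex L ∧
      Filter.Tendsto (fun n => hdist (K n) L) Filter.atTop (nhds 0) := by
  have hK_cauchy : IsHdistCauchy K := hcauchy
  have hL : IsSkeletalLimit K Filter.atTop (Filter.liminf K Filter.atTop) :=
    hK_cauchy.isSkeletalLimit_liminf hK
  exact ⟨_, hL.isSimplicialComplex hK, hK_cauchy.tendsto_hdist hK hL⟩
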